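/- arXiv:1908.06878 — 2 statements merged into one kernel-verified Lean document; each statement's English description precedes it below -/
import Mathlib

section
/- Fix 1 ≤ i ≤ N−1 and set α = x_i − x_{i+1}. Then R = K[x_1, …, x_N] is a free module over R^{s_i} with basis {1, α/2}; that is, every f ∈ R is uniquely expressible as f = a + b·(α/2) with a, b ∈ R^{s_i}. Moreover, setting a_1 = 1, a_2 = α/2 and a_1* = α/2, a_2* = 1, the Demazure operator satisfies ∂_i(a_p · a_q*) = δ_{pq} for p, q ∈ {1, 2}; i.e., {1, α/2} and {α/2, 1} are dual bases for the Frobenius extension R^{s_i} ⊆ R with trace ∂_i. -/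
/-!
STATEMENT 7: `R = K[x_1, ..., x_N]` is free over `R^{s_i}` with basis
`{1, α/2}` where `α = x_i - x_{i+1}`, and `{1, α/2}`, `{α/2, 1}` are dual bases
for the Frobenius extension `R^{s_i} ⊆ R` with trace the Demazure operator `∂_i`.
-/

open MvPolynomial

/-!
Put `β = α / 2`, so that `s β = -β`. The operator `∂` characterized by `α * ∂ f = f - s f` is linear
over the `s`-invariants, kills them, takes invariant values, and sends `β` to `1`. Multiplying by
`α` shows `f = ∂ (f * β) + ∂ f * β`, which is an expansion with invariant coefficients; conversely,
applying `∂` to `f = a + b * β` and to `f * β` recovers `b` and `a`.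
-/

/-- `D` is the Demazure operator (divided difference) `f ↦ (f - s f) / α` attached to the ring
endomorphism `s` and the element `α`. The division is encoded as a multiplication by `α`, so the
condition determines `D` as soon as `α` is regular. -/
def IsDemazureOperator {A F : Type*} [CommRing A] [FunLike F A A] (s : F) (α : A) (D : A → A) :
    Prop :=
  ∀ f, α * D f = f - s f

namespace IsDemazureOperator

variable {A F : Type*} [CommRing A] [FunLike F A A] {s : F} {α β : A} {D : A → A}

theorem map_eq_zero_of_invariant (hD : IsDemazureOperator s α D) (hα : IsLeftRegular α)
    {a : A} (ha : s a = a) : D a = 0 :=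
  hα <| show α * D a = α * 0 by rw [hD, ha, sub_self, mul_zero]

theorem map_half_eq_one (hD : IsDemazureOperator s α D) (hα : IsLeftRegular α)
    (hβ : 2 * β = α) (hsβ : s β = -β) : D β = 1 :=
  hα <| show α * D β = α * 1 by rw [hD, hsβ, ← hβ]; ring

variable [RingHomClass F A A]

theorem map_add (hD : IsDemazureOperator s α D) (hα : IsLeftRegular α) (f g : A) :
    D (f + g) = D f + D g :=
  hα <| show α * D (f + g) = α * (D f + D g) by
    rw [hD, mul_add, hD, hD, _root_.map_add]; ring

theorem map_invariant_mul (hD : IsDemazureOperator s α D) (hα : IsLeftRegular α)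
    {a : A} (ha : s a = a) (f : A) : D (a * f) = a * D f :=
  hα <| show α * D (a * f) = α * (a * D f) by
    rw [hD, mul_left_comm, hD, map_mul, ha, mul_sub]

theorem invariant (hD : IsDemazureOperator s α D) (hα : IsLeftRegular α)
    (hs : Function.Involutive s) (hsα : s α = -α) (f : A) : s (D f) = D f := by
  have hneg : -α * s (D f) = s f - f := by rw [← hsα, ← map_mul, hD, map_sub, hs f]
  exact hα <| show α * s (D f) = α * D f by linear_combination -hneg - hD f

theorem map_mul_self_eq_zero (hD : IsDemazureOperator s α D) (hα : IsLeftRegular α)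
    (hsβ : s β = -β) : D (β * β) = 0 :=
  hD.map_eq_zero_of_invariant hα (by rw [map_mul, hsβ, neg_mul_neg])

theorem map_add_invariant_mul (hD : IsDemazureOperator s α D) (hα : IsLeftRegular α)
    (hβ : 2 * β = α) (hsβ : s β = -β) {a b : A} (ha : s a = a) (hb : s b = b) :
    D (a + b * β) = b := by
  rw [hD.map_add hα, hD.map_eq_zero_of_invariant hα ha, hD.map_invariant_mul hα hb,
    hD.map_half_eq_one hα hβ hsβ, mul_one, zero_add]

theorem map_add_invariant_mul_mul (hD : IsDemazureOperator s α D) (hα : IsLeftRegular α)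
    (hβ : 2 * β = α) (hsβ : s β = -β) {a b : A} (ha : s a = a) (hb : s b = b) :
    D ((a + b * β) * β) = a := by
  rw [add_mul, mul_assoc, hD.map_add hα, hD.map_invariant_mul hα ha, hD.map_invariant_mul hα hb,
    hD.map_half_eq_one hα hβ hsβ, hD.map_mul_self_eq_zero hα hsβ, mul_one, mul_zero, add_zero]

theorem eq_map_mul_add_map_mul (hD : IsDemazureOperator s α D) (hα : IsLeftRegular α)
    (hβ : 2 * β = α) (hsβ : s β = -β) (f : A) : f = D (f * β) + D f * β := by
  have hfβ : α * D (f * β) = f * β + s f * β := by rw [hD, map_mul, hsβ]; ring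
  exact hα <| show α * f = α * (D (f * β) + D f * β) by
    linear_combination -hfβ - β * hD f - f * hβ

theorem existsUnique_eq_add_mul (hD : IsDemazureOperator s α D) (hα : IsLeftRegular α)
    (hs : Function.Involutive s) (hβ : 2 * β = α) (hsβ : s β = -β) (f : A) :
    ∃! p : A × A, s p.1 = p.1 ∧ s p.2 = p.2 ∧ f = p.1 + p.2 * β := by
  have hsα : s α = -α := by rw [← hβ, map_mul, map_ofNat, hsβ, mul_neg]
  refine ⟨(D (f * β), D f), ⟨hD.invariant hα hs hsα _, hD.invariant hα hs hsα _,
    hD.eq_map_mul_add_map_mul hα hβ hsβ f⟩, ?_⟩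
  rintro ⟨a, b⟩ ⟨ha, hb, rfl⟩
  exact Prod.ext (hD.map_add_invariant_mul_mul hα hβ hsβ ha hb).symm
    (hD.map_add_invariant_mul hα hβ hsβ ha hb).symm

end IsDemazureOperator

section MvPolynomial

variable {R σ : Type*} [CommRing R] {i j : σ}

theorem isLeftRegular_X_sub_X (hij : i ≠ j) :
    IsLeftRegular (X i - X j : MvPolynomial σ R) := by
  classical
  -- The shear `X i ↦ X i + X j` is injective and carries `X i - X j` to the regular `X i`.
  let shear : MvPolynomial σ R →ₐ[R] MvPolynomial σ R := aeval (Function.update X i (X i + X j))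
  let unshear : MvPolynomial σ R →ₐ[R] MvPolynomial σ R := aeval (Function.update X i (X i - X j))
  have hcomp : unshear.comp shear = AlgHom.id R _ := by
    ext1 k
    obtain rfl | hk := eq_or_ne k i
    · simp [shear, unshear, hij.symm]
    · simp [shear, unshear, hk]
  have hinj : Function.Injective shear :=
    Function.LeftInverse.injective (g := unshear) (DFunLike.congr_fun hcomp)
  have hshear : shear (X i - X j) = X i := by simp [shear, hij.symm]
  intro f g hfg
  apply hinj
  apply (isRegular_X (n := i)).left
  simpa only [map_mul, hshear] using congrArg shear hfg

theorem two_mul_C_invOf_two_mul [Invertible (2 : R)] (f : MvPolynomial σ R) :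
    2 * (C ⅟(2 : R) * f) = f := by
  rw [← map_ofNat C 2, ← mul_assoc, ← C_mul, mul_invOf_self, C_1, one_mul]

variable [DecidableEq σ]

theorem rename_swap_involutive (i j : σ) :
    Function.Involutive (rename (R := R) (Equiv.swap i j)) := fun f => by
  rw [rename_rename, ← Equiv.coe_trans, Equiv.swap_swap, Equiv.coe_refl, rename_id_apply]

theorem rename_swap_C_mul_X_sub_X (c : R) (i j : σ) :
    rename (Equiv.swap i j) (C c * (X i - X j)) = -(C c * (X i - X j)) := by
  simp only [map_mul, map_sub, rename_C, rename_X, Equiv.swap_apply_left, Equiv.swap_apply_right]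
  ring

theorem dual_bases_for_demazure_frobenius_extension_general [Invertible (2 : R)] (hij : i ≠ j)
    {D : MvPolynomial σ R → MvPolynomial σ R}
    (hD : IsDemazureOperator (rename (R := R) (Equiv.swap i j)) (X i - X j) D) :
    (∀ f : MvPolynomial σ R,
      ∃! p : MvPolynomial σ R × MvPolynomial σ R,
        rename (Equiv.swap i j) p.1 = p.1 ∧
        rename (Equiv.swap i j) p.2 = p.2 ∧
        f = p.1 + p.2 * (C ⅟(2 : R) * (X i - X j))) ∧
    D (1 * (C ⅟(2 : R) * (X i - X j))) = 1 ∧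
    D (1 * 1) = 0 ∧
    D ((C ⅟(2 : R) * (X i - X j)) * (C ⅟(2 : R) * (X i - X j))) = 0 ∧
    D ((C ⅟(2 : R) * (X i - X j)) * 1) = 1 := by
  have hα := isLeftRegular_X_sub_X (R := R) hij
  have hβ := two_mul_C_invOf_two_mul (X i - X j : MvPolynomial σ R)
  have hsβ := rename_swap_C_mul_X_sub_X ⅟(2 : R) i j
  have hDβ := hD.map_half_eq_one hα hβ hsβ
  simp only [one_mul, mul_one]
  exact ⟨hD.existsUnique_eq_add_mul hα (rename_swap_involutive i j) hβ hsβ, hDβ,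
    hD.map_eq_zero_of_invariant hα (map_one _), hD.map_mul_self_eq_zero hα hsβ, hDβ⟩

end MvPolynomial

/-- fix adjacent indices `i`, `i' = i+1` in `Fin N`, set
`α = x_i - x_{i'}`, and let `D = ∂_i` be the Demazure operator, characterized by
`(x_i - x_{i'}) * D f = f - s_i·f`.  Then every `f ∈ R = K[x_1, ..., x_N]` is
*uniquely* expressible as `f = a + b·(α/2)` with `a`, `b` invariant under `s_i`
(i.e. `R` is free over `R^{s_i}` with basis `{1, α/2}`), and with
`a₁ = 1, a₂ = α/2` and `a₁* = α/2, a₂* = 1` one has `∂_i(a_p · a_q*) = δ_{pq}`: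
`∂_i(1·(α/2)) = 1`, `∂_i(1·1) = 0`, `∂_i((α/2)·(α/2)) = 0`, `∂_i((α/2)·1) = 1`. -/
theorem dual_bases_for_demazure_frobenius_extension
    (K : Type*) [Field K] [CharZero K] (N : ℕ) (i i' : Fin N)
    (h : i.val + 1 = i'.val)
    (D : MvPolynomial (Fin N) K → MvPolynomial (Fin N) K)
    (hD : ∀ f, (X i - X i') * D f = f - rename (⇑(Equiv.swap i i')) f) :
    (∀ f : MvPolynomial (Fin N) K,
      ∃! p : MvPolynomial (Fin N) K × MvPolynomial (Fin N) K,
        rename (⇑(Equiv.swap i i')) p.1 = p.1 ∧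
        rename (⇑(Equiv.swap i i')) p.2 = p.2 ∧
        f = p.1 + p.2 * (C (2⁻¹ : K) * (X i - X i'))) ∧
    D ((1 : MvPolynomial (Fin N) K) * (C (2⁻¹ : K) * (X i - X i'))) = 1 ∧
    D ((1 : MvPolynomial (Fin N) K) * 1) = 0 ∧
    D ((C (2⁻¹ : K) * (X i - X i')) * (C (2⁻¹ : K) * (X i - X i'))) = 0 ∧
    D ((C (2⁻¹ : K) * (X i - X i')) * 1) = 1 := by
  let _ : Invertible (2 : K) := invertibleOfNonzero two_ne_zero
  simpa only [invOf_eq_inv] using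
    dual_bases_for_demazure_frobenius_extension_general (Fin.ne_of_lt (by omega : i < i')) hD
end

section
/- Fix 1 ≤ i ≤ N−1 and regard the Rouquier complexes F_i and F_i' as complexes of (R^{s_i}, R)-bimodules by restricting the left R-action to the subring R^{s_i} (this is composition with the merge bimodule). Then F_i is homotopy equivalent, as a complex of (R^{s_i}, R)-bimodules, to the bimodule R concentrated in homological degree 1 with zero differential, and F_i' is homotopy equivalent, as a complex of (R^{s_i}, R)-bimodules, to the bimodule R concentrated in homological degree −1 (the fork-sliding relations). -/
set_option synthInstance.maxHeartbeats 1000000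
set_option maxHeartbeats 1000000

open MvPolynomial TensorProduct

noncomputable section

/-- The polynomial ring `R = K[x_1, ..., x_N]`. -/
abbrev Rp (K : Type) [Field K] (N : ℕ) := MvPolynomial (Fin N) K

variable (K : Type) [Field K] [CharZero K] (N : ℕ)

/-- The invariant ring `R^{s}` of the transposition `s` exchanging `x_i` and `x_j`. -/
def swapInv (i j : Fin N) : Subalgebra K (Rp K N) where
  carrier := {f | rename (⇑(Equiv.swap i j)) f = f}
  mul_mem' := by
    intro a b ha hb
    simp only [Set.mem_setOf_eq, map_mul] at *
    rw [ha, hb]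
  one_mem' := by simp only [Set.mem_setOf_eq, map_one]
  add_mem' := by
    intro a b ha hb
    simp only [Set.mem_setOf_eq, map_add] at *
    rw [ha, hb]
  zero_mem' := by simp only [Set.mem_setOf_eq, map_zero]
  algebraMap_mem' := by
    intro c
    simp [Set.mem_setOf_eq, MvPolynomial.algebraMap_eq]

/-- The Soergel bimodule `B_i = R ⊗_{R^{s_i}} R`. -/
abbrev BS (i j : Fin N) := TensorProduct ↥(swapInv K N i j) (Rp K N) (Rp K N)

/-- The enveloping algebra `S = R ⊗_K R`; an `S`-module is an `R`-bimodule. -/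
abbrev SEnv := TensorProduct K (Rp K N) (Rp K N)

/-- `R` as `S`-module (the regular bimodule) via the multiplication map. -/
instance : Module (SEnv K N) (Rp K N) :=
  (Algebra.TensorProduct.lmul' K (S := Rp K N)).toRingHom.toModule

/-- The canonical `K`-algebra map `S = R ⊗_K R → B_i`, `a ⊗ b ↦ a ⊗ b`. -/
def toBS (i j : Fin N) : SEnv K N →ₐ[K] BS K N i j :=
  Algebra.TensorProduct.productMap
    (Algebra.TensorProduct.includeLeft (S := K))
    ((Algebra.TensorProduct.includeRight).restrictScalars K)

/-- `B_i` as `S`-module: the left `R`-action on the left tensor factor, the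
right `R`-action on the right tensor factor. -/
instance (i j : Fin N) : Module (SEnv K N) (BS K N i j) :=
  (toBS K N i j).toRingHom.toModule

end

/-!
STATEMENT 13: the fork-sliding relations.  Regard the Rouquier complexes
`F_i = (B_i → R)` (degrees 1, 0) and `F_i' = (R → B_i)` (degrees 0, -1) as
complexes of `(R^{s_i}, R)`-bimodules, i.e. modules over
`S' = R^{s_i} ⊗_K R`, by restricting the left `R`-action to `R^{s_i}`
(composition with the merge bimodule).  Then `F_i` is homotopy equivalent to
the bimodule `R` concentrated in degree `1` (zero differential), and `F_i'` is
homotopy equivalent to `R` concentrated in degree `-1`.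

The homotopy equivalences are spelled out as chain maps plus homotopies; note
that a chain map between complexes concentrated in single adjacent degrees has
no constraints, and homotopies to/from a one-term complex are forced to be
strict where no room exists, which yields exactly the six equations below for
each of the two statements. -/

noncomputable section
variable (K : Type) [Field K] [CharZero K] (N : ℕ)

/-- The mixed enveloping algebra `S' = R^{s_i} ⊗_K R`; a module over it is an
`(R^{s_i}, R)`-bimodule. -/
abbrev SMix (i j : Fin N) := TensorProduct K ↥(swapInv K N i j) (Rp K N)

/-- `R` as `(R^{s_i}, R)`-bimodule: `R^{s_i}` multiplies on the left (through
the inclusion `R^{s_i} ⊆ R`), `R` multiplies on the right. -/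
instance (i j : Fin N) : Module (SMix K N i j) (Rp K N) :=
  (Algebra.TensorProduct.productMap (R := K) (S := Rp K N)
    (IsScalarTower.toAlgHom K ↥(swapInv K N i j) (Rp K N))
    (AlgHom.id K (Rp K N))).toRingHom.toModule

/-- `B_i` as `(R^{s_i}, R)`-bimodule: `R^{s_i}` acts on the left tensor factor
and `R` acts on the right tensor factor. -/
instance (i j : Fin N) : Module (SMix K N i j) (BS K N i j) :=
  (Algebra.TensorProduct.productMap (R := K) (S := BS K N i j)
    (IsScalarTower.toAlgHom K ↥(swapInv K N i j) (BS K N i j))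
    (Algebra.TensorProduct.includeRight.restrictScalars K)).toRingHom.toModule

/-- Half the root: `α/2 = (x_i - x_j)/2`. -/
def hlf (i j : Fin N) : Rp K N := C (2⁻¹ : K) * (X i - X j)

end

/-!
Write `A = R^{s_i}` and `h = (x_i - x_{i+1}) / 2`. The left `A`-action on `R` and on `B_i` is
recovered from the right `R`-action, so an `(A, R)`-bimodule map between them is just a right
`R`-linear map. Moreover `R` is free over `A` on `1` and `h`, the coefficient of `h` being the
Demazure operator `∂`. Hence every `A`-linear `T : R → R` with `T 1 = 1` gives a split short exact
sequence `0 → R → B_i → R → 0` whose maps are `r ↦ h ⊗ r - 1 ⊗ T(h) r` and `x ⊗ y ↦ T(x) y`, split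
by `x ⊗ y ↦ ∂(x) y` and `r ↦ 1 ⊗ r`. For `T = id` the second map is the differential of `F_i`; for
`T = s_i` the first one is the differential of `F_i'`, because `s_i h = -h`.
-/

section QuadraticExtension

variable {A R : Type*} [CommRing A] [CommRing R] [Algebra A R]

theorem mul'_rTensor_one_tmul_mul (T : R →ₗ[A] R) (r : R) (z : R ⊗[A] R) :
    LinearMap.mul' A R (T.rTensor R (1 ⊗ₜ r * z)) = r * LinearMap.mul' A R (T.rTensor R z) := by
  induction z with
  | zero => simp
  | tmul x y => simp [mul_left_comm]
  | add z w hz hw => simp only [mul_add, map_add, hz, hw]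

theorem tmul_one_eq_of_basis (b : Module.Basis (Fin 2) A R) (hb : b 0 = 1) {T : R →ₗ[A] R}
    (hT : T 1 = 1) (x : R) :
    x ⊗ₜ[A] (1 : R) =
      (b 1 ⊗ₜ 1 - 1 ⊗ₜ T (b 1)) * 1 ⊗ₜ algebraMap A R (b.coord 1 x) + 1 ⊗ₜ T x := by
  have hx : x = b.coord 0 x • 1 + b.coord 1 x • b 1 := by
    simpa only [Fin.sum_univ_two, hb, Module.Basis.coord_apply] using (b.sum_repr x).symm
  have hTx : T x = b.coord 0 x • 1 + b.coord 1 x • T (b 1) := by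
    conv_lhs => rw [hx, map_add, map_smul, map_smul, hT]
  rw [hTx]
  conv_lhs => rw [hx]
  simp only [sub_mul, Algebra.TensorProduct.tmul_mul_tmul, mul_one,
    Algebra.algebraMap_eq_smul_one, mul_smul_comm, add_tmul, tmul_add, tmul_smul, smul_tmul']
  abel

end QuadraticExtension

theorem X_sub_X_ne_zero {σ k : Type*} [CommRing k] [Nontrivial k] {i j : σ} (hij : i ≠ j) :
    (X i - X j : MvPolynomial σ k) ≠ 0 :=
  sub_ne_zero.mpr fun h => hij (X_injective h)

theorem C_inv_two_mul_two {σ k : Type*} [Field k] [NeZero (2 : k)] :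
    (C 2⁻¹ : MvPolynomial σ k) * 2 = 1 := by
  rw [← map_ofNat C 2, ← C_mul, inv_mul_cancel₀ two_ne_zero, C_1]

section Transposition

variable {σ k : Type*} [DecidableEq σ]

theorem rename_swap_rename_swap [CommSemiring k] (i j : σ) (f : MvPolynomial σ k) :
    rename (Equiv.swap i j) (rename (Equiv.swap i j) f) = f := by
  rw [rename_rename, ← Equiv.coe_trans, Equiv.swap_swap, Equiv.coe_refl, rename_id_apply]

theorem rename_swap_X_sub_X [CommRing k] (i j : σ) :
    rename (Equiv.swap i j) (X i - X j : MvPolynomial σ k) = -(X i - X j) := by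
  simp

theorem X_sub_X_dvd_sub_rename_swap [CommRing k] (i j : σ) (f : MvPolynomial σ k) :
    X i - X j ∣ f - rename (Equiv.swap i j) f := by
  let I : Ideal (MvPolynomial σ k) := Ideal.span {X i - X j}
  have hij : Ideal.Quotient.mkₐ k I (X i) = Ideal.Quotient.mkₐ k I (X j) :=
    Ideal.Quotient.eq.mpr (Ideal.mem_span_singleton_self _)
  -- The transposition is trivial modulo `X i - X j`, since it is so on the variables.
  have hswap : Ideal.Quotient.mkₐ k I =
      (Ideal.Quotient.mkₐ k I).comp (rename (Equiv.swap i j)) := by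
    refine algHom_ext fun l => ?_
    rw [AlgHom.comp_apply, rename_X, Equiv.swap_apply_def]
    split_ifs with hi hj
    · rw [hi, hij]
    · rw [hj, hij]
    · rfl
  exact Ideal.mem_span_singleton.mp (Ideal.Quotient.eq.mp (DFunLike.congr_fun hswap f))

end Transposition

noncomputable section

variable {K : Type} [Field K] {N : ℕ} {i j : Fin N}

theorem mem_swapInv {f : Rp K N} : f ∈ swapInv K N i j ↔ rename (Equiv.swap i j) f = f :=
  Iff.rfl

theorem rename_swap_hlf (i j : Fin N) : rename (Equiv.swap i j) (hlf K N i j) = -hlf K N i j := by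
  rw [hlf, map_mul, rename_C, rename_swap_X_sub_X, mul_neg]

theorem C_inv_two_mul_add_rename_swap_mem_swapInv (f : Rp K N) :
    C 2⁻¹ * (f + rename (Equiv.swap i j) f) ∈ swapInv K N i j := by
  rw [mem_swapInv, map_mul, map_add, rename_C, rename_swap_rename_swap, add_comm]

theorem exists_mem_swapInv_sub_rename_swap (hij : i ≠ j) (f : Rp K N) :
    ∃ q ∈ swapInv K N i j, f - rename (Equiv.swap i j) f = (X i - X j) * q := by
  obtain ⟨q, hq⟩ := X_sub_X_dvd_sub_rename_swap i j f
  refine ⟨q, mul_left_cancel₀ (X_sub_X_ne_zero hij) ?_, hq⟩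
  have hsq := congrArg (rename (Equiv.swap i j)) hq
  rw [map_sub, rename_swap_rename_swap, map_mul, rename_swap_X_sub_X] at hsq
  linear_combination hsq + hq

variable (K i j) in
/-- The transposition `s` as an endomorphism of `R` over the invariant ring. -/
def swapLinearMap : Rp K N →ₗ[swapInv K N i j] Rp K N where
  toFun := rename (Equiv.swap i j)
  map_add' := map_add _
  map_smul' a f := by
    simp [Subalgebra.smul_def, mem_swapInv.mp a.2]

theorem swapLinearMap_one : swapLinearMap K i j 1 = 1 :=
  map_one (rename (Equiv.swap i j))

theorem swapLinearMap_hlf : swapLinearMap K i j (hlf K N i j) = -hlf K N i j :=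
  rename_swap_hlf i j

section Basis

variable [NeZero (2 : K)]

theorem hlf_ne_zero (hij : i ≠ j) : hlf K N i j ≠ 0 :=
  mul_ne_zero (left_ne_zero_of_mul_eq_one C_inv_two_mul_two) (X_sub_X_ne_zero hij)

theorem linearIndependent_one_hlf (hij : i ≠ j) :
    LinearIndependent (swapInv K N i j) ![1, hlf K N i j] := by
  refine LinearIndependent.pair_iff.mpr fun a c hac => ?_
  have hsum : (a : Rp K N) + c * hlf K N i j = 0 := by simpa [Subalgebra.smul_def] using hac
  have hdiff : (a : Rp K N) - c * hlf K N i j = 0 := by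
    simpa [mem_swapInv.mp a.2, mem_swapInv.mp c.2, rename_swap_hlf, sub_eq_add_neg] using
      congrArg (rename (Equiv.swap i j)) hsum
  have htwo : (2 : Rp K N) ≠ 0 := right_ne_zero_of_mul_eq_one C_inv_two_mul_two
  have ha : (2 : Rp K N) * a = 0 := by linear_combination hsum + hdiff
  have hc : (2 * hlf K N i j) * c = 0 := by linear_combination hsum - hdiff
  exact ⟨Subtype.ext ((mul_eq_zero_iff_left htwo).mp ha),
    Subtype.ext ((mul_eq_zero_iff_left (mul_ne_zero htwo (hlf_ne_zero hij))).mp hc)⟩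

theorem span_one_hlf (hij : i ≠ j) :
    ⊤ ≤ Submodule.span (swapInv K N i j) (Set.range ![1, hlf K N i j]) := by
  intro f _
  obtain ⟨q, hq, hfq⟩ := exists_mem_swapInv_sub_rename_swap hij f
  rw [Matrix.range_cons_cons_empty, Submodule.mem_span_pair]
  refine ⟨⟨_, C_inv_two_mul_add_rename_swap_mem_swapInv f⟩, ⟨q, hq⟩, ?_⟩
  simp only [Subalgebra.smul_def, smul_eq_mul, hlf]
  linear_combination f * C_inv_two_mul_two (σ := Fin N) (k := K) - C 2⁻¹ * hfq

/-- The basis `1, (x_i - x_j) / 2` of `R` over the invariant ring. -/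
def swapInvBasis (hij : i ≠ j) : Module.Basis (Fin 2) (swapInv K N i j) (Rp K N) :=
  Module.Basis.mk (linearIndependent_one_hlf hij) (span_one_hlf hij)

theorem swapInvBasis_zero (hij : i ≠ j) : swapInvBasis (K := K) hij 0 = 1 := by
  simp [swapInvBasis]

theorem swapInvBasis_one (hij : i ≠ j) : swapInvBasis hij 1 = hlf K N i j := by
  simp [swapInvBasis]

/-- The Demazure operator `∂ f = (f - s f) / (x_i - x_j)`, encoded as the coefficient of
`(x_i - x_j) / 2` in the basis `swapInvBasis`. -/
def demazure (hij : i ≠ j) : Rp K N →ₗ[swapInv K N i j] Rp K N :=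
  Algebra.linearMap _ _ ∘ₗ (swapInvBasis hij).coord 1

theorem demazure_one (hij : i ≠ j) : demazure hij (1 : Rp K N) = 0 := by
  rw [← swapInvBasis_zero hij]
  simp [demazure]

theorem demazure_hlf (hij : i ≠ j) : demazure hij (hlf K N i j) = 1 := by
  rw [← swapInvBasis_one hij]
  simp [demazure]

end Basis

namespace SMix

variable (K i j) in
/-- The multiplication `a ⊗ r ↦ a r`, through which `R^s ⊗ R` acts on bimodules whose left
`R^s`-action is the restriction of the right `R`-action. -/
def mulAlgHom : SMix K N i j →ₐ[K] Rp K N :=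
  Algebra.TensorProduct.productMap (IsScalarTower.toAlgHom K (swapInv K N i j) (Rp K N))
    (AlgHom.id K (Rp K N))

theorem mulAlgHom_one_tmul (r : Rp K N) : mulAlgHom K i j (1 ⊗ₜ r) = r := by
  simp [mulAlgHom]

theorem smul_def (c : SMix K N i j) (r : Rp K N) : c • r = mulAlgHom K i j c * r :=
  rfl

theorem smul_BS_def (c : SMix K N i j) (z : BS K N i j) :
    c • z = 1 ⊗ₜ mulAlgHom K i j c * z := by
  have hact : Algebra.TensorProduct.productMap
      (IsScalarTower.toAlgHom K (swapInv K N i j) (BS K N i j))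
      (Algebra.TensorProduct.includeRight.restrictScalars K) =
      (Algebra.TensorProduct.includeRight.restrictScalars K).comp (mulAlgHom K i j) := by
    refine Algebra.TensorProduct.ext' fun a r => ?_
    have ha : algebraMap (swapInv K N i j) (BS K N i j) a = 1 ⊗ₜ algebraMap _ _ a :=
      (AlgHom.commutes Algebra.TensorProduct.includeRight a).symm
    simp [mulAlgHom, ha]
  exact congrArg (· * z) (DFunLike.congr_fun hact c)

variable {M : Type*} [AddCommGroup M] [Module (SMix K N i j) M]

theorem linearMap_ext_one {f g : Rp K N →ₗ[SMix K N i j] M} (h : f 1 = g 1) : f = g := by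
  ext r
  have hr : (1 ⊗ₜ r : SMix K N i j) • (1 : Rp K N) = r := by
    rw [smul_def, mulAlgHom_one_tmul, mul_one]
  rw [← hr, map_smul, map_smul, h]

theorem linearMap_ext_tmul_one {f g : BS K N i j →ₗ[SMix K N i j] M}
    (h : ∀ x : Rp K N, f (x ⊗ₜ 1) = g (x ⊗ₜ 1)) : f = g := by
  ext z
  induction z using TensorProduct.induction_on with
  | zero => rw [map_zero, map_zero]
  | add z w hz hw => rw [map_add, map_add, hz, hw]
  | tmul x y =>
    have hxy : (1 ⊗ₜ y : SMix K N i j) • (x ⊗ₜ 1 : BS K N i j) = x ⊗ₜ y := by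
      rw [smul_BS_def, mulAlgHom_one_tmul, Algebra.TensorProduct.tmul_mul_tmul, one_mul, mul_one]
    rw [← hxy, map_smul, map_smul, h]

/-- The bimodule map `R → B_i`, `r ↦ z · r`. -/
def toSpanSingleton (z : BS K N i j) : Rp K N →ₗ[SMix K N i j] BS K N i j where
  toFun r := z * 1 ⊗ₜ r
  map_add' r r' := by rw [TensorProduct.tmul_add, mul_add]
  map_smul' c r := by
    rw [smul_def, RingHom.id_apply, smul_BS_def, mul_left_comm,
      Algebra.TensorProduct.tmul_mul_tmul, one_mul]

theorem toSpanSingleton_apply (z : BS K N i j) (r : Rp K N) :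
    toSpanSingleton z r = z * 1 ⊗ₜ r :=
  rfl

/-- The bimodule map `B_i → R`, `x ⊗ y ↦ T(x) y`. -/
def twistedMul (T : Rp K N →ₗ[swapInv K N i j] Rp K N) :
    BS K N i j →ₗ[SMix K N i j] Rp K N where
  toFun z := LinearMap.mul' _ _ (T.rTensor _ z)
  map_add' z w := by rw [map_add, map_add]
  map_smul' c z := by
    rw [smul_BS_def, mul'_rTensor_one_tmul_mul, RingHom.id_apply, smul_def]

theorem twistedMul_tmul (T : Rp K N →ₗ[swapInv K N i j] Rp K N) (x y : Rp K N) :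
    twistedMul T (x ⊗ₜ y) = T x * y :=
  rfl

/-- The bimodule map `R → B_i`, `r ↦ h ⊗ r - 1 ⊗ T(h) r` with `h = (x_i - x_j) / 2`: the
inclusion of the kernel of `twistedMul T` when `T 1 = 1`. -/
def twistedMulKer (T : Rp K N →ₗ[swapInv K N i j] Rp K N) :
    Rp K N →ₗ[SMix K N i j] BS K N i j :=
  toSpanSingleton (hlf K N i j ⊗ₜ 1 - 1 ⊗ₜ T (hlf K N i j))

theorem twistedMulKer_one (T : Rp K N →ₗ[swapInv K N i j] Rp K N) :
    twistedMulKer T 1 = hlf K N i j ⊗ₜ 1 - 1 ⊗ₜ T (hlf K N i j) :=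
  mul_one _

variable {T : Rp K N →ₗ[swapInv K N i j] Rp K N}

theorem twistedMul_comp_twistedMulKer (hT : T 1 = 1) : twistedMul T ∘ₗ twistedMulKer T = 0 :=
  linearMap_ext_one <| by
    simp [twistedMulKer_one, twistedMul_tmul, hT]

theorem twistedMul_comp_toSpanSingleton_one (hT : T 1 = 1) :
    twistedMul T ∘ₗ toSpanSingleton 1 = LinearMap.id :=
  linearMap_ext_one <| by
    simp [toSpanSingleton_apply, Algebra.TensorProduct.one_def, twistedMul_tmul, hT]

theorem twistedMul_demazure_comp_twistedMulKer [NeZero (2 : K)] (hij : i ≠ j) :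
    twistedMul (demazure hij) ∘ₗ twistedMulKer T = LinearMap.id :=
  linearMap_ext_one <| by
    simp [twistedMulKer_one, twistedMul_tmul, demazure_one, demazure_hlf]

theorem twistedMulKer_comp_add_toSpanSingleton_one_comp [NeZero (2 : K)] (hij : i ≠ j)
    (hT : T 1 = 1) :
    twistedMulKer T ∘ₗ twistedMul (demazure hij) + toSpanSingleton 1 ∘ₗ twistedMul T =
      LinearMap.id := by
  refine linearMap_ext_tmul_one fun x => ?_
  have hx := tmul_one_eq_of_basis (swapInvBasis hij) (swapInvBasis_zero hij) hT x
  rw [swapInvBasis_one] at hx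
  simpa [twistedMulKer, toSpanSingleton_apply, twistedMul_tmul, demazure] using hx.symm

theorem eq_twistedMul_id {d : BS K N i j →ₗ[SMix K N i j] Rp K N}
    (hd : ∀ x y : Rp K N, d (x ⊗ₜ y) = x * y) : d = twistedMul LinearMap.id :=
  linearMap_ext_tmul_one fun x => hd x 1

theorem eq_twistedMulKer_swapLinearMap {d' : Rp K N →ₗ[SMix K N i j] BS K N i j}
    (hd' : ∀ r : Rp K N, d' r = (r * hlf K N i j) ⊗ₜ 1 + r ⊗ₜ hlf K N i j) :
    d' = twistedMulKer (swapLinearMap K i j) :=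
  linearMap_ext_one <| by
    rw [hd', twistedMulKer_one, swapLinearMap_hlf, TensorProduct.tmul_neg, sub_neg_eq_add, one_mul]

end SMix

end

open SMix in
theorem fork_sliding_relations_general
    (K : Type) [Field K] [NeZero (2 : K)] (N : ℕ) (i j : Fin N) (hij : i ≠ j)
    (d : BS K N i j →ₗ[SMix K N i j] Rp K N)
    (hd : ∀ x y : Rp K N, d (x ⊗ₜ y) = x * y)
    (d' : Rp K N →ₗ[SMix K N i j] BS K N i j)
    (hd' : ∀ r : Rp K N, d' r = (r * hlf K N i j) ⊗ₜ 1 + r ⊗ₜ hlf K N i j) :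
    (∃ (v : Rp K N →ₗ[SMix K N i j] BS K N i j)
       (u : BS K N i j →ₗ[SMix K N i j] Rp K N)
       (k : Rp K N →ₗ[SMix K N i j] BS K N i j),
       d ∘ₗ v = 0 ∧
       u ∘ₗ v = LinearMap.id ∧
       v ∘ₗ u + k ∘ₗ d = LinearMap.id ∧
       d ∘ₗ k = LinearMap.id) ∧
    (∃ (f : Rp K N →ₗ[SMix K N i j] BS K N i j)
       (g : BS K N i j →ₗ[SMix K N i j] Rp K N)
       (k : BS K N i j →ₗ[SMix K N i j] Rp K N),
       g ∘ₗ d' = 0 ∧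
       g ∘ₗ f = LinearMap.id ∧
       f ∘ₗ g + d' ∘ₗ k = LinearMap.id ∧
       k ∘ₗ d' = LinearMap.id) := by
  obtain rfl := eq_twistedMul_id hd
  obtain rfl := eq_twistedMulKer_swapLinearMap hd'
  have hid : (LinearMap.id : Rp K N →ₗ[swapInv K N i j] Rp K N) 1 = 1 := rfl
  have hswap : swapLinearMap K i j 1 = 1 := swapLinearMap_one
  exact ⟨⟨twistedMulKer LinearMap.id, twistedMul (demazure hij), toSpanSingleton 1,
      twistedMul_comp_twistedMulKer hid,
      twistedMul_demazure_comp_twistedMulKer hij,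
      twistedMulKer_comp_add_toSpanSingleton_one_comp hij hid,
      twistedMul_comp_toSpanSingleton_one hid⟩,
    ⟨toSpanSingleton 1, twistedMul (swapLinearMap K i j), twistedMul (demazure hij),
      twistedMul_comp_twistedMulKer hswap,
      twistedMul_comp_toSpanSingleton_one hswap,
      (add_comm _ _).trans (twistedMulKer_comp_add_toSpanSingleton_one_comp hij hswap),
      twistedMul_demazure_comp_twistedMulKer hij⟩⟩

/-- fix `1 ≤ i ≤ N-1` (below `i' = i+1`) and regard the Rouquier
complexes `F_i = (B_i →d R)` (degrees 1, 0; `d` the multiplication map) and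
`F_i' = (R →d' B_i)` (degrees 0, -1; `d'` given by
`f ↦ (1/2)·f·((x_i - x_{i'}) ⊗ 1 + 1 ⊗ (x_i - x_{i'}))`) as complexes of
`(R^{s_i}, R)`-bimodules (modules over `S' = R^{s_i} ⊗_K R`).  Then `F_i` is
homotopy equivalent, as a complex of `(R^{s_i}, R)`-bimodules, to `R`
concentrated in homological degree `1` with zero differential, and `F_i'` is
homotopy equivalent to `R` concentrated in homological degree `-1`
(the fork-sliding relations). -/
theorem fork_sliding_relations
    (K : Type) [Field K] [CharZero K] (N : ℕ) (i i' : Fin N)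
    (hadj : i.val + 1 = i'.val)
    (d : BS K N i i' →ₗ[SMix K N i i'] Rp K N)
    (hd : ∀ x y : Rp K N, d (x ⊗ₜ y) = x * y)
    (d' : Rp K N →ₗ[SMix K N i i'] BS K N i i')
    (hd' : ∀ r : Rp K N, d' r = (r * hlf K N i i') ⊗ₜ 1 + r ⊗ₜ hlf K N i i') :
    -- `F_i` is homotopy equivalent to `R` concentrated in degree `1`:
    (∃ (v : Rp K N →ₗ[SMix K N i i'] BS K N i i')
       (u : BS K N i i' →ₗ[SMix K N i i'] Rp K N)
       (k : Rp K N →ₗ[SMix K N i i'] BS K N i i'),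
       d ∘ₗ v = 0 ∧
       u ∘ₗ v = LinearMap.id ∧
       v ∘ₗ u + k ∘ₗ d = LinearMap.id ∧
       d ∘ₗ k = LinearMap.id) ∧
    -- `F_i'` is homotopy equivalent to `R` concentrated in degree `-1`:
    (∃ (f : Rp K N →ₗ[SMix K N i i'] BS K N i i')
       (g : BS K N i i' →ₗ[SMix K N i i'] Rp K N)
       (k : BS K N i i' →ₗ[SMix K N i i'] Rp K N),
       g ∘ₗ d' = 0 ∧
       g ∘ₗ f = LinearMap.id ∧
       f ∘ₗ g + d' ∘ₗ k = LinearMap.id ∧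
       k ∘ₗ d' = LinearMap.id) := by
  have hne : i ≠ i' := fun h => by omega
  exact fork_sliding_relations_general K N i i' hne d hd d' hd'
end
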